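/- Let R = k[x_1,...,x_n] with n odd, m = (n−1)/2, and let M be a finite length graded R-module that is Gorenstein, i.e., admits τ: M ≅ Hom_k(M,k)(−s) with τ*(−s) = ±τ. Define β_{m+1}: A_{m+1}(M) → Hom_R(A_m(M), R⊗Λ^n W)(−s) by β(r⊗w⊗m)(r'⊗w'⊗m') = (r'r)⊗(w'∧w)·τ(m)(m'). Then the diagram with φ_{m+1}: A_{m+1}(M) → A_m(M) (Nielsen differential) and its dual satisfies φ^∨_{m+1} ∘ β_{m+1} = (−1)^m β_m ∘ φ_{m+1}, and consequently the middle map φ_{m+1} ∘ β_{m+1}^{−1} is symmetric if m is even and skew-symmetric if m is odd (with respect to dual bases, up to the sign ±). -/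

import Mathlib

open MvPolynomial TensorProduct

noncomputable section

set_option synthInstance.maxHeartbeats 400000

variable {k : Type*} [Field k] {n : ℕ}

variable (k n) in
/-- The exterior algebra `Λ W` on the `n`-dimensional space `W` dual to the span of
the variables. -/
abbrev Lam : Type _ := ExteriorAlgebra k (Fin n → k)

variable (k n) in
/-- The `i`-th exterior power `Λ^i W`, as a submodule of the exterior algebra. -/
def lamPow (i : ℕ) : Submodule k (Lam k n) :=
  LinearMap.range (ExteriorAlgebra.ι k (M := Fin n → k)) ^ i

/-- Contraction by the functional `x_l`. -/
def contr (l : Fin n) : Lam k n →ₗ[k] Lam k n :=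
  CliffordAlgebra.contractLeft (Q := (0 : QuadraticForm k (Fin n → k)))
    (LinearMap.proj l)

variable (k n) in
/-- The algebra `S = R ⊗_k Λ W`. -/
abbrev S : Type _ := MvPolynomial (Fin n) k ⊗[k] Lam k n

/-- Multiplication by `x_l` on an `R`-module `M`, as a `k`-linear map. -/
def smulX (M : Type*) [AddCommGroup M] [Module k M]
    [Module (MvPolynomial (Fin n) k) M]
    [IsScalarTower k (MvPolynomial (Fin n) k) M] (l : Fin n) : M →ₗ[k] M where
  toFun m := (X l : MvPolynomial (Fin n) k) • m
  map_add' := smul_add _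
  map_smul' c m := by
    show (X l : MvPolynomial (Fin n) k) • c • m = c • (X l : MvPolynomial (Fin n) k) • m
    rw [smul_comm]

variable (M : Type*) [AddCommGroup M] [Module k M]
  [Module (MvPolynomial (Fin n) k) M] [IsScalarTower k (MvPolynomial (Fin n) k) M]

/-- Nielsen's differential `φ` on the total module `A(M) = (R ⊗ Λ W) ⊗ M`:
`(r ⊗ w) ⊗ m ↦ Σ_l ((x_l r) ⊗ (x_l ⌟ w)) ⊗ m − Σ_l (r ⊗ (x_l ⌟ w)) ⊗ (x_l m)`. -/
def nphiA : (S k n ⊗[k] M) →ₗ[k] (S k n ⊗[k] M) :=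
  (∑ l : Fin n,
    TensorProduct.map
      (TensorProduct.map (LinearMap.mulLeft k (X l : MvPolynomial (Fin n) k)) (contr l))
      (LinearMap.id (R := k) (M := M)))

/-- The second summand of Nielsen's differential (with its sign). -/
def nphiB : (S k n ⊗[k] M) →ₗ[k] (S k n ⊗[k] M) :=
  (∑ l : Fin n,
    TensorProduct.map
      (TensorProduct.map (LinearMap.id (R := k) (M := MvPolynomial (Fin n) k)) (contr l))
      (-(smulX M l)))

/-- Nielsen's differential `φ = φ_{•,0} + φ_{•,1}`. -/
def nphi : (S k n ⊗[k] M) →ₗ[k] (S k n ⊗[k] M) :=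
  nphiA (k := k) (n := n) M + nphiB (k := k) (n := n) M

/-- The pairing `β` defined by a bilinear form `b` on `M`:
`β((s ⊗ m))((s' ⊗ m')) = b(m)(m') • (s' * s)` with values in `S = R ⊗ Λ W`. -/
def nbeta (b : M →ₗ[k] M →ₗ[k] k) :
    (S k n ⊗[k] M) →ₗ[k] (S k n ⊗[k] M) →ₗ[k] S k n :=
  TensorProduct.curry
    ((TensorProduct.rid k (S k n)).toLinearMap ∘ₗ
      TensorProduct.map (TensorProduct.lift ((LinearMap.mul k (S k n)).flip))
        (TensorProduct.lift b) ∘ₗ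
      (TensorProduct.tensorTensorTensorComm k (S k n) M (S k n) M).toLinearMap)

theorem lamPow_eq_zero {i : ℕ} (h : n < i) {w : Lam k n} (hw : w ∈ lamPow k n i) : w = 0 := by
  have hspan : ∀ x, x ∈ Submodule.span k (Set.range (ExteriorAlgebra.ιMulti k i
      (M := Fin n → k))) → x ∈ lamPow k n i := fun x hx => by
    rw [ExteriorAlgebra.ιMulti_span_fixedDegree] at hx
    exact hx
  have hw' : w ∈ ⋀[k]^i (Fin n → k) := hw
  rw [← ExteriorAlgebra.ιMulti_span_fixedDegree] at hw'
  induction hw' using Submodule.span_induction with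
  | mem x hx =>
    obtain ⟨v, rfl⟩ := hx
    apply AlternatingMap.map_linearDependent
    intro hv
    have := hv.fintype_card_le_finrank
    simp at this
    omega
  | zero => rfl
  | add x y hx hy h1 h2 =>
    rw [h1 (hspan x hx), h2 (hspan y hy), add_zero]
  | smul a x hx h1 => rw [h1 (hspan x hx), smul_zero]

theorem contr_ι_mul (l : Fin n) (a : Fin n → k) (w : Lam k n) :
    contr l (ExteriorAlgebra.ι k a * w) = a l • w - ExteriorAlgebra.ι k a * contr l w :=
  CliffordAlgebra.contractLeft_ι_mul (Q := (0 : QuadraticForm k (Fin n → k)))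
    (LinearMap.proj l) a w

theorem contr_algebraMap (l : Fin n) (c : k) :
    contr l (algebraMap k (Lam k n) c) = 0 :=
  CliffordAlgebra.contractLeft_algebraMap (Q := (0 : QuadraticForm k (Fin n → k)))
    (LinearMap.proj l) c

theorem contr_mul (l : Fin n) {i : ℕ} {u : Lam k n} (hu : u ∈ lamPow k n i) (w : Lam k n) :
    contr l (u * w) = contr l u * w + (-1 : k) ^ i • (u * contr l w) := by
  refine Submodule.pow_induction_on_left'
    (LinearMap.range (ExteriorAlgebra.ι k (M := Fin n → k)))
    (C := fun i u _ => contr l (u * w) = contr l u * w + (-1 : k) ^ i • (u * contr l w))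
    ?_ ?_ ?_ hu
  · intro c
    rw [contr_algebraMap, ← Algebra.smul_def, ← Algebra.smul_def, map_smul]
    simp
  · intro x y i hx hy h1 h2
    simp only [add_mul, map_add, h1, h2, smul_add]
    abel
  · rintro _ ⟨a, rfl⟩ i x hx h
    rw [mul_assoc, contr_ι_mul, contr_ι_mul, h, Nat.succ_eq_add_one, pow_succ, sub_mul, mul_add, mul_assoc,
      smul_mul_assoc, mul_assoc, mul_smul_comm, mul_neg_one, neg_smul]
    abel

theorem contr_mem (l : Fin n) {i : ℕ} {u : Lam k n} (hu : u ∈ lamPow k n i) :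
    ∀ j, i = j + 1 → contr l u ∈ lamPow k n j := by
  refine Submodule.pow_induction_on_left'
    (LinearMap.range (ExteriorAlgebra.ι k (M := Fin n → k)))
    (C := fun i u _ => ∀ j, i = j + 1 → contr l u ∈ lamPow k n j)
    ?_ ?_ ?_ hu
  · intro c j h
    omega
  · intro x y i hx hy h1 h2 j hj
    rw [map_add]
    exact add_mem (h1 j hj) (h2 j hj)
  · rintro _ ⟨a, rfl⟩ i x hx h j hj
    obtain rfl : i = j := by simpa using hj
    rw [contr_ι_mul]
    refine sub_mem (Submodule.smul_mem _ _ hx) ?_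
    cases i with
    | zero =>
      rw [pow_zero] at hx
      obtain ⟨c, rfl⟩ := Submodule.mem_one.mp hx
      rw [contr_algebraMap, mul_zero]
      exact zero_mem _
    | succ i =>
      unfold lamPow
      rw [pow_succ']
      exact Submodule.mul_mem_mul ⟨a, rfl⟩ (h i rfl)

theorem ι_mul_lam (a : Fin n → k) {i : ℕ} {u : Lam k n} (hu : u ∈ lamPow k n i) :
    ExteriorAlgebra.ι k a * u = (-1 : k) ^ i • (u * ExteriorAlgebra.ι k a) := by
  refine Submodule.pow_induction_on_left'
    (LinearMap.range (ExteriorAlgebra.ι k (M := Fin n → k)))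
    (C := fun i u _ => ExteriorAlgebra.ι k a * u = (-1 : k) ^ i • (u * ExteriorAlgebra.ι k a))
    ?_ ?_ ?_ hu
  · intro c
    rw [Algebra.commutes]; simp
  · intro x y i hx hy h1 h2
    rw [add_mul, mul_add, smul_add, h1, h2]
  · rintro _ ⟨c, rfl⟩ i x hx h
    have hsw : ExteriorAlgebra.ι k a * ExteriorAlgebra.ι k c
        = - (ExteriorAlgebra.ι k c * ExteriorAlgebra.ι k a) :=
      eq_neg_of_add_eq_zero_left (ExteriorAlgebra.ι_add_mul_swap a c)
    rw [← mul_assoc, hsw, neg_mul, mul_assoc, h, Nat.succ_eq_add_one, pow_succ, mul_neg_one,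
      neg_smul, mul_smul_comm, mul_assoc]

theorem lam_comm {i j : ℕ} {u v : Lam k n} (hu : u ∈ lamPow k n i) (hv : v ∈ lamPow k n j) :
    u * v = (-1 : k) ^ (i * j) • (v * u) := by
  refine Submodule.pow_induction_on_left'
    (LinearMap.range (ExteriorAlgebra.ι k (M := Fin n → k)))
    (C := fun i u _ => u * v = (-1 : k) ^ (i * j) • (v * u))
    ?_ ?_ ?_ hu
  · intro c
    rw [Algebra.commutes]; simp
  · intro x y i hx hy h1 h2
    rw [add_mul, mul_add, smul_add, h1, h2]
  · rintro _ ⟨c, rfl⟩ i x hx h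
    rw [mul_assoc, h, mul_smul_comm, ← mul_assoc, ι_mul_lam c hv, smul_mul_assoc, smul_smul,
      mul_assoc, ← pow_add, Nat.succ_mul]

theorem contr_swap {m : ℕ} (hn : n = 2 * m + 1) (l : Fin n) {u w : Lam k n}
    (hu : u ∈ lamPow k n (m + 1)) (hw : w ∈ lamPow k n (m + 1)) :
    contr l u * w = (-1 : k) ^ m • (u * contr l w) := by
  have h0 : u * w = 0 := by
    refine lamPow_eq_zero (i := (m + 1) + (m + 1)) (by omega) ?_
    unfold lamPow
    rw [pow_add]
    exact Submodule.mul_mem_mul hu hw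
  have h := contr_mul l hu w
  rw [h0, map_zero, pow_succ, mul_neg_one, neg_smul, ← sub_eq_add_neg] at h
  exact (sub_eq_zero.mp h.symm)

theorem contr_swap' {m : ℕ} (hn : n = 2 * m + 1) (l : Fin n) {u w : Lam k n}
    (hu : u ∈ lamPow k n (m + 1)) (hw : w ∈ lamPow k n (m + 1)) :
    contr l u * w = (-1 : k) ^ m • (contr l w * u) := by
  rw [contr_swap hn l hu hw, lam_comm hu (contr_mem l hw m rfl), mul_comm (m + 1) m,
    (Nat.even_mul_succ_self m).neg_one_pow, one_smul]

theorem nbeta_tmul (b : M →ₗ[k] M →ₗ[k] k) (s s' : S k n) (a a' : M) :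
    nbeta M b (s ⊗ₜ[k] a) (s' ⊗ₜ[k] a') = b a a' • (s' * s) := rfl

theorem nphi_tmul (r : MvPolynomial (Fin n) k) (w : Lam k n) (a : M) :
    nphi M ((r ⊗ₜ[k] w) ⊗ₜ[k] a) =
      ∑ l : Fin n, (((X l * r) ⊗ₜ[k] contr l w) ⊗ₜ[k] a
        - (r ⊗ₜ[k] contr l w) ⊗ₜ[k] ((X l : MvPolynomial (Fin n) k) • a)) := by
  simp only [nphi, nphiA, nphiB, LinearMap.add_apply, LinearMap.sum_apply,
    TensorProduct.map_tmul, LinearMap.mulLeft_apply, LinearMap.id_apply, LinearMap.neg_apply,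
    TensorProduct.tmul_neg, Finset.sum_sub_distrib, Finset.sum_neg_distrib, sub_eq_add_neg,
    Finset.sum_add_distrib]
  rfl

theorem nbeta_nphi_right (b : M →ₗ[k] M →ₗ[k] k) (r r' : MvPolynomial (Fin n) k)
    (w w' : Lam k n) (a a' : M) :
    nbeta M b ((r ⊗ₜ[k] w) ⊗ₜ[k] a) (nphi M ((r' ⊗ₜ[k] w') ⊗ₜ[k] a')) =
      ∑ l : Fin n, (b a a' • ((X l * r' * r) ⊗ₜ[k] (contr l w' * w))
        - b a ((X l : MvPolynomial (Fin n) k) • a') • ((r' * r) ⊗ₜ[k] (contr l w' * w))) := by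
  rw [nphi_tmul, map_sum]
  refine Finset.sum_congr rfl fun l _ => ?_
  rw [map_sub, nbeta_tmul, nbeta_tmul, Algebra.TensorProduct.tmul_mul_tmul,
    Algebra.TensorProduct.tmul_mul_tmul]

theorem nbeta_nphi_left (b : M →ₗ[k] M →ₗ[k] k) (r r' : MvPolynomial (Fin n) k)
    (w w' : Lam k n) (a a' : M) :
    nbeta M b (nphi M ((r ⊗ₜ[k] w) ⊗ₜ[k] a)) ((r' ⊗ₜ[k] w') ⊗ₜ[k] a') =
      ∑ l : Fin n, (b a a' • ((r' * (X l * r)) ⊗ₜ[k] (w' * contr l w))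
        - b ((X l : MvPolynomial (Fin n) k) • a) a' • ((r' * r) ⊗ₜ[k] (w' * contr l w))) := by
  rw [nphi_tmul, map_sum, LinearMap.sum_apply]
  refine Finset.sum_congr rfl fun l _ => ?_
  rw [map_sub, LinearMap.sub_apply, nbeta_tmul, nbeta_tmul, Algebra.TensorProduct.tmul_mul_tmul,
    Algebra.TensorProduct.tmul_mul_tmul]

/-- Let `n = 2m+1` be odd and let `M` be a finite length Gorenstein
module, with (±)-symmetric nondegenerate pairing `b(m)(m') = τ(m)(m')` compatible
with the `R`-action.  Then on elements of exterior degree `m+1` one has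
`φ^∨_{m+1} ∘ β_{m+1} = (-1)^m β_m ∘ φ_{m+1}`, i.e.
`β(t)(φ t'') = (-1)^m • β(φ t)(t'')`; consequently the middle pairing
`(t, t'') ↦ β(t)(φ t'')` is symmetric for `m` even and skew-symmetric for `m` odd
(up to the sign `ε` of the pairing). -/
theorem middle_map_selfdual
    [FiniteDimensional k M]
    (m : ℕ) (hn : n = 2 * m + 1)
    (b : M →ₗ[k] M →ₗ[k] k)
    (ε : k) (hε : ε = 1 ∨ ε = -1)
    (hsymm : ∀ a a' : M, b a a' = ε * b a' a)
    (hnd : ∀ a : M, (∀ a' : M, b a a' = 0) → a = 0)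
    (hbal : ∀ (l : Fin n) (a a' : M),
      b ((X l : MvPolynomial (Fin n) k) • a) a' = b a ((X l : MvPolynomial (Fin n) k) • a')) :
    (∀ (r r'' : MvPolynomial (Fin n) k) (w w'' : Lam k n) (a a'' : M),
      w ∈ lamPow k n (m + 1) → w'' ∈ lamPow k n (m + 1) →
        nbeta M b ((r ⊗ₜ[k] w) ⊗ₜ[k] a) (nphi M ((r'' ⊗ₜ[k] w'') ⊗ₜ[k] a'')) =
          ((-1 : k) ^ m) •
            nbeta M b (nphi M ((r ⊗ₜ[k] w) ⊗ₜ[k] a)) ((r'' ⊗ₜ[k] w'') ⊗ₜ[k] a'')) ∧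
    (∀ (r r'' : MvPolynomial (Fin n) k) (w w'' : Lam k n) (a a'' : M),
      w ∈ lamPow k n (m + 1) → w'' ∈ lamPow k n (m + 1) →
        nbeta M b ((r ⊗ₜ[k] w) ⊗ₜ[k] a) (nphi M ((r'' ⊗ₜ[k] w'') ⊗ₜ[k] a'')) =
          (ε * (-1 : k) ^ m) •
            nbeta M b ((r'' ⊗ₜ[k] w'') ⊗ₜ[k] a'') (nphi M ((r ⊗ₜ[k] w) ⊗ₜ[k] a))) := by
  constructor
  · intro r r'' w w'' a a'' hw hw''
    rw [nbeta_nphi_right, nbeta_nphi_left, Finset.smul_sum]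
    refine Finset.sum_congr rfl fun l _ => ?_
    rw [contr_swap hn l hw'' hw, hbal, smul_sub, TensorProduct.tmul_smul, TensorProduct.tmul_smul,
      smul_comm (b a a''), smul_comm (b a _), mul_left_comm, mul_assoc]
  · intro r r'' w w'' a a'' hw hw''
    rw [nbeta_nphi_right, nbeta_nphi_right, Finset.smul_sum]
    refine Finset.sum_congr rfl fun l _ => ?_
    rw [contr_swap' hn l hw'' hw, hsymm a a'', hsymm a _, hbal, smul_sub, TensorProduct.tmul_smul,
      TensorProduct.tmul_smul, mul_comm r r'', mul_assoc, mul_assoc, mul_comm r r'']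
    simp only [smul_smul]
    congr 2 <;> ring

end
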